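/- Suppose y* ∈ C¹_rd(𝕋;ℝⁿ) is a weak local minimizer of 𝓛 with the left endpoint free: there is δ > 0 such that 𝓛[y*] ≤ 𝓛[y] for every y ∈ C¹_rd(𝕋;ℝⁿ) with y(b) = y*(b) and ‖y − y*‖_{1,∞} < δ (no condition is imposed at t = a). Then the natural boundary condition L_v(a, y*(a), y*^Δ(a)) − μ(a)·L_y(a, y*(a), y*^Δ(a)) = 0 holds. -/

import Mathlib

open Set Filter

noncomputable section

-- Forward jump operator of the set `S`.
open Classical in
def tsSigma (S : Set ℝ) (t : ℝ) : ℝ :=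
  if ({s | s ∈ S ∧ t < s}).Nonempty then sInf {s | s ∈ S ∧ t < s} else t

-- Backward jump operator of the set `S`.
open Classical in
def tsRho (S : Set ℝ) (t : ℝ) : ℝ :=
  if ({s | s ∈ S ∧ s < t}).Nonempty then sSup {s | s ∈ S ∧ s < t} else t

/-- Graininess function. -/
def tsMu (S : Set ℝ) (t : ℝ) : ℝ := tsSigma S t - t

/-- `S^k = S \ (ρ(max S), max S]`. -/
def tsTk (S : Set ℝ) : Set ℝ := S \ Set.Ioc (tsRho S (sSup S)) (sSup S)

/-- Delta differentiability at `t` of `f` regarded as a function on the time scale `S`,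
with delta derivative `d`. -/
def deltaDiffAt {E : Type*} [NormedAddCommGroup E] [NormedSpace ℝ E]
    (S : Set ℝ) (f : ℝ → E) (t : ℝ) (d : E) : Prop :=
  ∀ ε > 0, ∃ δ > 0, ∀ s ∈ S ∩ Set.Ioo (t - δ) (t + δ),
    ‖f (tsSigma S t) - f s - (tsSigma S t - s) • d‖ ≤ ε * |tsSigma S t - s|

/-- rd-continuity of `f` on its domain `S`: continuity (within `S`) at right-dense points and
existence of a finite left-sided limit along `S` at left-dense points. -/
def RdContinuousOn {E : Type*} [NormedAddCommGroup E]
    (S : Set ℝ) (f : ℝ → E) : Prop :=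
  ∀ t ∈ S, (tsSigma S t = t → ContinuousWithinAt f S t) ∧
    (tsRho S t = t → ∃ l : E, Filter.Tendsto f (nhdsWithin t (S ∩ Set.Iio t)) (nhds l))

/-- `y ∈ C¹_rd(T)`, with delta derivative `yd`. -/
def C1rd {E : Type*} [NormedAddCommGroup E] [NormedSpace ℝ E]
    (T : Set ℝ) (y yd : ℝ → E) : Prop :=
  (∀ t ∈ tsTk T, deltaDiffAt T y t (yd t)) ∧ RdContinuousOn (tsTk T) yd

/-- `F` is a delta antiderivative of `f` on the time scale `S`; the delta integral
`∫_c^d f Δt` is `F d - F c` for any such `F`. -/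
def IsDeltaAntideriv {E : Type*} [NormedAddCommGroup E] [NormedSpace ℝ E]
    (S : Set ℝ) (f F : ℝ → E) : Prop :=
  ∀ t ∈ tsTk S, deltaDiffAt S F t (f t)

/-- Sup norm of `f` over the set `S`. -/
def tsSupNorm {E : Type*} [NormedAddCommGroup E] (S : Set ℝ) (f : ℝ → E) : ℝ :=
  sSup ((fun t => ‖f t‖) '' S)

abbrev En (n : ℕ) : Type := EuclideanSpace ℝ (Fin n)

/-!
If `L_v - μ(a) L_y` were negative at `a` in some direction `ξ`, the variation `η • ξ` with
`η(t) = -∫_t^c (c - r)⁺ Δr` would lower the action. Here `c` is `σ(a)` when `a` is right-scattered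
and a point of `T` close to `a` otherwise, so that `η` is supported on `[a, c)`, where `η^Δ > 0`
and `|η + μ(a) η^Δ| ≤ ε η^Δ`. To first order the integrand therefore changes by
`η L_y ξ + η^Δ L_v ξ ≈ η^Δ (L_v - μ(a) L_y) ξ < 0` at every point of `[a, c)`.
Replacing `ξ` by `-ξ` excludes the positive sign.
-/

open MeasureTheory
open scoped Topology Asymptotics

section JumpOperators

variable {S : Set ℝ} {a b t s : ℝ}

lemma le_tsSigma (S : Set ℝ) (t : ℝ) : t ≤ tsSigma S t := by
  unfold tsSigma
  split_ifs with h
  · exact le_csInf h fun s hs => hs.2.le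
  · exact le_rfl

lemma tsSigma_le (hs : s ∈ S) (hts : t < s) : tsSigma S t ≤ s := by
  have hne : {s | s ∈ S ∧ t < s}.Nonempty := ⟨s, hs, hts⟩
  rw [tsSigma, if_pos hne]
  exact csInf_le ⟨t, fun x hx => hx.2.le⟩ ⟨hs, hts⟩

lemma tsRho_le (S : Set ℝ) (t : ℝ) : tsRho S t ≤ t := by
  unfold tsRho
  split_ifs with h
  · exact csSup_le h fun s hs => hs.2.le
  · exact le_rfl

lemma le_tsRho (hs : s ∈ S) (hst : s < t) : s ≤ tsRho S t := by
  have hne : {s | s ∈ S ∧ s < t}.Nonempty := ⟨s, hs, hst⟩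
  rw [tsRho, if_pos hne]
  exact le_csSup ⟨t, fun x hx => hx.2.le⟩ ⟨hs, hst⟩

lemma tsSigma_mem (hS : IsClosed S) (ht : t ∈ S) : tsSigma S t ∈ S := by
  unfold tsSigma
  split_ifs with h
  · exact closure_minimal (fun x hx => hx.1) hS
      (csInf_mem_closure h ⟨t, fun x hx => hx.2.le⟩)
  · exact ht

lemma tsSigma_eq_self_iff :
    tsSigma S t = t ↔ ∀ u ∈ S, t < u → ∀ x > t, (S ∩ Ioo t x).Nonempty := by
  constructor
  · intro hσ u hu htu x hx
    have hne : {s | s ∈ S ∧ t < s}.Nonempty := ⟨u, hu, htu⟩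
    rw [tsSigma, if_pos hne] at hσ
    obtain ⟨s, ⟨hs, hts⟩, hsx⟩ := exists_lt_of_csInf_lt hne (hσ.trans_lt hx)
    exact ⟨s, hs, hts, hsx⟩
  · intro hdense
    by_contra hne
    have hlt : t < tsSigma S t := (le_tsSigma S t).lt_of_ne' hne
    by_cases h : {s | s ∈ S ∧ t < s}.Nonempty
    · obtain ⟨u, hu, htu⟩ := h
      obtain ⟨s, hs, hts, hsσ⟩ := hdense u hu htu _ hlt
      exact hsσ.not_ge (tsSigma_le hs hts)
    · exact hne (if_neg h)

lemma nhdsWithin_inter_Ioi_eq_bot (h : tsSigma S t ≠ t) : 𝓝[S ∩ Ioi t] t = ⊥ := by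
  have hlt : t < tsSigma S t := (le_tsSigma S t).lt_of_ne' h
  rw [← empty_mem_iff_bot]
  filter_upwards [self_mem_nhdsWithin, mem_nhdsWithin_of_mem_nhds (Iio_mem_nhds hlt)]
    with x hx hxσ
  exact (tsSigma_le hx.1 hx.2).not_gt hxσ

lemma nhdsWithin_inter_Iio_eq_bot (h : tsRho S t ≠ t) : 𝓝[S ∩ Iio t] t = ⊥ := by
  have hlt : tsRho S t < t := (tsRho_le S t).lt_of_ne h
  rw [← empty_mem_iff_bot]
  filter_upwards [self_mem_nhdsWithin, mem_nhdsWithin_of_mem_nhds (Ioi_mem_nhds hlt)]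
    with x hx hxρ
  exact (le_tsRho hx.1 hx.2).not_gt hxρ

lemma tsTk_eq_inter_Iic (hb : IsGreatest S b) : tsTk S = S ∩ Iic (tsRho S b) := by
  ext t
  rw [tsTk, hb.csSup_eq]
  exact ⟨fun ht => ⟨ht.1, not_lt.1 fun h => ht.2 ⟨h, hb.2 ht.1⟩⟩,
    fun ht => ⟨ht.1, fun h => h.1.not_ge ht.2⟩⟩

lemma mem_tsTk_of_lt (hb : IsGreatest S b) (ht : t ∈ S) (htb : t < b) : t ∈ tsTk S := by
  rw [tsTk_eq_inter_Iic hb]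
  exact ⟨ht, le_tsRho ht htb⟩

lemma mem_tsTk_of_le (hb : IsGreatest S b) (hs : s ∈ S) (hst : s ≤ t) (ht : t ∈ tsTk S) :
    s ∈ tsTk S := by
  rw [tsTk_eq_inter_Iic hb] at ht ⊢
  exact ⟨hs, hst.trans ht.2⟩

lemma isLeast_tsTk (ha : IsLeast S a) (hb : IsGreatest S b) (hab : a < b) :
    IsLeast (tsTk S) a :=
  ⟨mem_tsTk_of_lt hb ha.1 hab, fun _ ht => ha.2 ht.1⟩

lemma isCompact_tsTk (hS : IsClosed S) (ha : IsLeast S a) (hb : IsGreatest S b) :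
    IsCompact (tsTk S) := by
  rw [tsTk_eq_inter_Iic hb]
  exact isCompact_Icc.of_isClosed_subset (hS.inter isClosed_Iic)
    fun t ht => ⟨ha.2 ht.1, hb.2 ht.1⟩

lemma tsSigma_tsTk_eq_self (hb : IsGreatest S b) (hσ : tsSigma S t = t) :
    tsSigma (tsTk S) t = t := by
  rw [tsSigma_eq_self_iff] at hσ ⊢
  intro u hu htu x hx
  obtain ⟨s, hs, hts, hsm⟩ := hσ u hu.1 htu (min u x) (lt_min htu hx)
  have hsb : s < b := (hsm.trans_le (min_le_left u x)).trans_le (hb.2 hu.1)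
  exact ⟨s, mem_tsTk_of_lt hb hs hsb, hts, hsm.trans_le (min_le_right u x)⟩

end JumpOperators

section RdContinuity

variable {E F : Type*} [NormedAddCommGroup E] [NormedAddCommGroup F] {S : Set ℝ} {t : ℝ}
  {f : ℝ → E}

lemma rdContinuousOn_of_continuousOn (hf : ContinuousOn f S) : RdContinuousOn S f :=
  fun t ht => ⟨fun _ => hf t ht, fun _ => ⟨f t, (hf t ht).mono inter_subset_left⟩⟩

lemma RdContinuousOn.prodMk {g : ℝ → F} (hf : RdContinuousOn S f) (hg : RdContinuousOn S g) :
    RdContinuousOn S fun t => (f t, g t) := by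
  refine fun t ht => ⟨fun h => ((hf t ht).1 h).prodMk ((hg t ht).1 h), fun h => ?_⟩
  obtain ⟨l, hl⟩ := (hf t ht).2 h
  obtain ⟨m, hm⟩ := (hg t ht).2 h
  exact ⟨(l, m), hl.prodMk_nhds hm⟩

lemma RdContinuousOn.comp_continuousOn {Φ : ℝ → E → F} (hf : RdContinuousOn S f)
    (hΦ : ContinuousOn (fun p : ℝ × E => Φ p.1 p.2) (S ×ˢ univ)) :
    RdContinuousOn S fun t => Φ t (f t) := by
  have tendsto_comp {t : ℝ} (ht : t ∈ S) {A : Set ℝ} (hA : A ⊆ S) {l : E}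
      (hl : Tendsto f (𝓝[A] t) (𝓝 l)) :
      Tendsto (fun s => Φ s (f s)) (𝓝[A] t) (𝓝 (Φ t l)) := by
    refine Tendsto.comp (g := fun p : ℝ × E => Φ p.1 p.2) (f := fun s => (s, f s))
      (hΦ (t, l) ⟨ht, mem_univ l⟩) (tendsto_nhdsWithin_iff.2 ⟨?_, ?_⟩)
    · exact (tendsto_id.mono_left nhdsWithin_le_nhds).prodMk_nhds hl
    · filter_upwards [self_mem_nhdsWithin] with s hs
      exact ⟨hA hs, mem_univ _⟩
  refine fun t ht => ⟨fun h => tendsto_comp ht subset_rfl ((hf t ht).1 h), fun h => ?_⟩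
  obtain ⟨l, hl⟩ := (hf t ht).2 h
  exact ⟨Φ t l, tendsto_comp ht inter_subset_left hl⟩

lemma RdContinuousOn.exists_tendsto_left (hf : RdContinuousOn S f) (ht : t ∈ S) :
    ∃ l, Tendsto f (𝓝[S ∩ Iio t] t) (𝓝 l) := by
  by_cases h : tsRho S t = t
  · exact (hf t ht).2 h
  · rw [nhdsWithin_inter_Iio_eq_bot h]
    exact ⟨0, tendsto_bot⟩

lemma RdContinuousOn.continuousWithinAt_Ici (hf : RdContinuousOn S f) (ht : t ∈ S) :
    ContinuousWithinAt f (S ∩ Ici t) t := by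
  by_cases h : tsSigma S t = t
  · exact ((hf t ht).1 h).mono inter_subset_left
  · have hright : ContinuousWithinAt f (S ∩ Ioi t) t := by
      rw [ContinuousWithinAt, nhdsWithin_inter_Ioi_eq_bot h]
      exact tendsto_bot
    refine (continuousWithinAt_insert_self.2 hright).mono fun x hx => ?_
    exact hx.2.eq_or_lt.imp Eq.symm fun h => ⟨hx.1, h⟩

lemma RdContinuousOn.isBounded_image (hf : RdContinuousOn S f) (hS : IsCompact S) :
    Bornology.IsBounded (f '' S) := by
  refine hS.induction_on (p := fun A => Bornology.IsBounded (f '' A)) (by simp)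
    (fun A B hAB hB => hB.subset (image_mono hAB))
    (fun A B hA hB => by simpa only [image_union] using hA.union hB) fun t ht => ?_
  obtain ⟨l, hl⟩ := hf.exists_tendsto_left ht
  obtain ⟨A, hA, hAb⟩ := Metric.exists_isBounded_image_of_tendsto hl
  obtain ⟨B, hB, hBb⟩ := Metric.exists_isBounded_image_of_tendsto (hf.continuousWithinAt_Ici ht)
  refine ⟨A ∪ B, ?_, by simpa only [image_union] using hAb.union hBb⟩
  rw [← inter_univ S, ← Iio_union_Ici (a := t), inter_union_distrib_left, nhdsWithin_union]
  exact union_mem_sup hA hB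

end RdContinuity

section Floor

/-- The largest point of a closed set `S` not exceeding `r`, with junk values for `r` below `S`.
The map `f ∘ tsFloor S` extends `f` from `S` to the line, constantly on every gap of `S`, so its
Lebesgue integral is the delta integral of `f`. -/
def tsFloor (S : Set ℝ) (r : ℝ) : ℝ := sSup (S ∩ Iic r)

variable {S : Set ℝ} {a r s t : ℝ}

lemma le_tsFloor (hs : s ∈ S) (hsr : s ≤ r) : s ≤ tsFloor S r :=
  le_csSup ⟨r, fun _ hx => hx.2⟩ ⟨hs, hsr⟩

lemma tsFloor_le (hs : s ∈ S) (hsr : s ≤ r) : tsFloor S r ≤ r :=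
  csSup_le ⟨s, hs, hsr⟩ fun _ hx => hx.2

lemma tsFloor_mem (hS : IsClosed S) (hs : s ∈ S) (hsr : s ≤ r) : tsFloor S r ∈ S :=
  ((hS.inter isClosed_Iic).csSup_mem ⟨s, hs, hsr⟩ ⟨r, fun _ hx => hx.2⟩).1

lemma tsFloor_eq (hs : s ∈ S) (hsr : s ≤ r) (hgap : ∀ x ∈ S, x ≤ r → x ≤ s) :
    tsFloor S r = s :=
  le_antisymm (csSup_le ⟨s, hs, hsr⟩ fun x hx => hgap x hx.1 hx.2) (le_tsFloor hs hsr)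

lemma eventually_tsFloor_eq_of_notMem (hS : IsClosed S) (hr : r ∉ S) :
    ∀ᶠ x in 𝓝 r, tsFloor S x = tsFloor S r := by
  obtain ⟨ε, hε, hball⟩ := Metric.isOpen_iff.1 hS.isOpen_compl r hr
  filter_upwards [Metric.ball_mem_nhds r hε] with x hx
  have hdisj {s : ℝ} (hs : s ∈ S) : s ≤ x ↔ s ≤ r := by
    have hsball : ε ≤ |s - r| := not_lt.1 fun h => hball h hs
    have hxball : |x - r| < ε := hx
    rw [abs_lt] at hxball
    rcases abs_cases (s - r) with h | h <;> constructor <;> intro <;> linarith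
  exact congrArg sSup (Set.ext fun s => and_congr_right hdisj)

lemma tendsto_tsFloor (hS : IsClosed S) (h : 𝓝[S ∩ Iio r] r ≠ ⊥) :
    Tendsto (tsFloor S) (𝓝 r) (𝓝[S] r) := by
  have : (𝓝[S ∩ Iio r] r).NeBot := ⟨h⟩
  have exists_between {l : ℝ} (hl : l < r) : ∃ s ∈ S, l < s ∧ s < r := by
    obtain ⟨s, hs, hls⟩ := Filter.nonempty_of_mem (inter_mem self_mem_nhdsWithin
      (mem_nhdsWithin_of_mem_nhds (Ioi_mem_nhds hl) : Ioi l ∈ 𝓝[S ∩ Iio r] r))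
    exact ⟨s, hs.1, hls, hs.2⟩
  obtain ⟨s₀, hs₀, -, hs₀r⟩ := exists_between (sub_one_lt r)
  refine tendsto_nhdsWithin_iff.2 ⟨tendsto_order.2 ⟨fun l hl => ?_, fun u hu => ?_⟩, ?_⟩
  · obtain ⟨s, hs, hls, hsr⟩ := exists_between hl
    filter_upwards [lt_mem_nhds hsr] with x hx
    exact hls.trans_le (le_tsFloor hs hx.le)
  · filter_upwards [lt_mem_nhds hs₀r, gt_mem_nhds hu] with x hx hxu
    exact (tsFloor_le hs₀ hx.le).trans_lt hxu
  · filter_upwards [lt_mem_nhds hs₀r] with x hx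
    exact tsFloor_mem hS hs₀ hx.le

variable {E : Type*} [NormedAddCommGroup E] {f : ℝ → E}

lemma RdContinuousOn.stronglyMeasurable_comp_tsFloor (hS : IsClosed S)
    (hf : RdContinuousOn S f) : StronglyMeasurable fun r => f (tsFloor S r) := by
  refine .of_countable_not_continuousAt <|
    ((countable_setOfPred_isolated_left_within (s := S)).union
      (countable_setOfPred_isolated_right_within (s := S))).mono fun r hr => ?_
  by_contra hisol
  simp only [mem_union, mem_ofPred_eq, not_or, not_and] at hr hisol
  refine hr ?_
  by_cases hrS : r ∈ S
  · have hσ : tsSigma S r = r := by_contra fun h =>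
      hisol.2 hrS (nhdsWithin_inter_Ioi_eq_bot h)
    have hfloor : tsFloor S r = r := tsFloor_eq hrS le_rfl fun _ _ h => h
    rw [ContinuousAt, hfloor]
    exact ((hf r hrS).1 hσ).tendsto.comp (tendsto_tsFloor hS (hisol.1 hrS))
  · exact continuousAt_const.congr
      ((eventually_tsFloor_eq_of_notMem hS hrS).mono fun x hx => (congrArg f hx).symm)

lemma RdContinuousOn.intervalIntegrable_comp_tsFloor (hS : IsCompact S) (ha : a ∈ S)
    (hf : RdContinuousOn S f) (hs : a ≤ s) (ht : a ≤ t) :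
    IntervalIntegrable (fun r => f (tsFloor S r)) volume s t := by
  obtain ⟨C, hC⟩ := (hf.isBounded_image hS).exists_norm_le
  have hmeas := (hf.stronglyMeasurable_comp_tsFloor hS.isClosed).aestronglyMeasurable
    (μ := volume)
  refine intervalIntegrable_iff.2 <| Measure.integrableOn_of_bounded
    measure_Ioc_lt_top.ne hmeas (M := C) ?_
  filter_upwards [ae_restrict_mem measurableSet_uIoc] with r hr
  have har : a ≤ r := (le_min hs ht).trans hr.1.le
  exact hC _ (mem_image_of_mem f (tsFloor_mem hS.isClosed ha har))

lemma integral_comp_tsFloor_lt {f g : ℝ → ℝ} {b c : ℝ} (hS : IsCompact S) (ha : a ∈ S)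
    (hac : a < c) (hcb : c ≤ b) (hf : RdContinuousOn S f) (hg : RdContinuousOn S g)
    (hle : ∀ t ∈ S, f t ≤ g t) (hlt : ∀ t ∈ S, t < c → f t < g t) :
    ∫ r in a..b, f (tsFloor S r) < ∫ r in a..b, g (tsFloor S r) := by
  have hab : a ≤ b := hac.le.trans hcb
  have floor_mem {r : ℝ} (hr : a ≤ r) : tsFloor S r ∈ S := tsFloor_mem hS.isClosed ha hr
  refine intervalIntegral.integral_lt_integral_of_ae_le_of_measure_setOfPred_lt_ne_zero hab
    (hf.intervalIntegrable_comp_tsFloor hS ha le_rfl hab)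
    (hg.intervalIntegrable_comp_tsFloor hS ha le_rfl hab) ?_ ?_
  · filter_upwards [ae_restrict_mem measurableSet_Ioc] with r hr
    exact hle _ (floor_mem hr.1.le)
  · refine ne_of_gt (lt_of_lt_of_le ?_ (measure_mono (s := Ioo a c) fun r hr =>
      hlt _ (floor_mem hr.1.le) ((tsFloor_le ha hr.1.le).trans_lt hr.2)))
    rw [Measure.restrict_apply measurableSet_Ioo,
      inter_eq_left.2 (Ioo_subset_Ioc_self.trans (Ioc_subset_Ioc_right hcb)), Real.volume_Ioo]
    exact ENNReal.ofReal_pos.2 (sub_pos.2 hac)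

end Floor

section DeltaDerivative

variable {E : Type*} [NormedAddCommGroup E] [NormedSpace ℝ E] {S T : Set ℝ} {t : ℝ}

lemma deltaDiffAt_iff_isLittleO {f : ℝ → E} {d : E} :
    deltaDiffAt S f t d ↔
      (fun s => f (tsSigma S t) - f s - (tsSigma S t - s) • d) =o[𝓝[S] t]
        fun s => tsSigma S t - s := by
  simp_rw [Asymptotics.isLittleO_iff, (nhdsWithin_hasBasis (nhds_basis_Ioo_pos t) S).eventually_iff,
    deltaDiffAt, inter_comm S, Real.norm_eq_abs]

lemma deltaDiffAt.continuousWithinAt {f : ℝ → E} {d : E} (ht : t ∈ S)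
    (hf : deltaDiffAt S f t d) : ContinuousWithinAt f S t := by
  have hlim : Tendsto (fun s : ℝ => tsSigma S t - s) (𝓝[S] t) (𝓝 (tsSigma S t - t)) :=
    (tendsto_const_nhds.sub tendsto_id).mono_left nhdsWithin_le_nhds
  have hrem : Tendsto (fun s => f (tsSigma S t) - f s - (tsSigma S t - s) • d) (𝓝[S] t) (𝓝 0) :=
    (Asymptotics.isLittleO_one_iff ℝ).1
      ((deltaDiffAt_iff_isLittleO.1 hf).trans_isBigO (hlim.isBigO_one ℝ))
  have hrem_self : f (tsSigma S t) - f t - (tsSigma S t - t) • d = 0 :=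
    tendsto_nhds_unique (tendsto_pure_nhds _ t) (hrem.mono_left (pure_le_nhdsWithin ht))
  have hfσ : Tendsto (fun _ : ℝ => f (tsSigma S t)) (𝓝[S] t) (𝓝 (f (tsSigma S t))) :=
    tendsto_const_nhds
  have hval : f (tsSigma S t) - (tsSigma S t - t) • d - 0 = f t := by
    rw [sub_zero, ← sub_eq_zero.1 hrem_self, sub_sub_cancel]
  exact (hval ▸ (hfσ.sub (hlim.smul_const d)).sub hrem).congr fun s => by abel

lemma deltaDiffAt.add_smul {f : ℝ → E} {η : ℝ → ℝ} {d : E} {e : ℝ}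
    (hf : deltaDiffAt S f t d) (hη : deltaDiffAt S η t e) (x : E) :
    deltaDiffAt S (fun s => f s + η s • x) t (d + e • x) := by
  rw [deltaDiffAt_iff_isLittleO] at hf hη ⊢
  have hηx := (ContinuousLinearMap.toSpanSingleton ℝ x).isBigO_comp
    (fun s => η (tsSigma S t) - η s - (tsSigma S t - s) • e) (𝓝[S] t)
  refine (hf.add (hηx.trans_isLittleO hη)).congr_left fun s => ?_
  simp only [ContinuousLinearMap.toSpanSingleton_apply, smul_eq_mul]
  module

lemma C1rd.add_smul {y yd : ℝ → E} {η ηd : ℝ → ℝ} (hy : C1rd T y yd) (hη : C1rd T η ηd)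
    (x : E) : C1rd T (fun t => y t + η t • x) (fun t => yd t + ηd t • x) := by
  refine ⟨fun t ht => (hy.1 t ht).add_smul (hη.1 t ht) x, ?_⟩
  refine (hy.2.prodMk hη.2).comp_continuousOn (Φ := fun _ p => p.1 + p.2 • x) ?_
  fun_prop

lemma C1rd.continuousOn {y yd : ℝ → E} (hy : C1rd T y yd) : ContinuousOn y (tsTk T) :=
  fun t ht => ((hy.1 t ht).continuousWithinAt ht.1).mono sdiff_subset

lemma C1rd.rdContinuousOn_comp {F : Type*} [NormedAddCommGroup F] {Φ : ℝ → E → E → F}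
    {y yd : ℝ → E} (hy : C1rd T y yd)
    (hΦ : ContinuousOn (fun p : ℝ × E × E => Φ p.1 p.2.1 p.2.2) (T ×ˢ univ)) :
    RdContinuousOn (tsTk T) fun t => Φ t (y t) (yd t) :=
  ((rdContinuousOn_of_continuousOn hy.continuousOn).prodMk hy.2).comp_continuousOn
    (Φ := fun t p => Φ t p.1 p.2) (hΦ.mono (prod_mono sdiff_subset subset_rfl))

lemma deltaDiffAt_of_lt_tsSigma {f : ℝ → E} {d : E} (hf : ContinuousWithinAt f S t)
    (ht : t < tsSigma S t) (hd : (tsSigma S t - t) • d = f (tsSigma S t) - f t) :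
    deltaDiffAt S f t d := by
  rw [deltaDiffAt_iff_isLittleO]
  have hlim : Tendsto (fun s : ℝ => tsSigma S t - s) (𝓝[S] t) (𝓝 (tsSigma S t - t)) :=
    (tendsto_const_nhds.sub tendsto_id).mono_left nhdsWithin_le_nhds
  have hnum : Tendsto (fun s => f (tsSigma S t) - f s - (tsSigma S t - s) • d) (𝓝[S] t)
      (𝓝 0) := by
    simpa only [hd, sub_self] using
      ((tendsto_const_nhds (x := f (tsSigma S t))).sub hf.tendsto).sub (hlim.smul_const d)
  have hne : tsSigma S t - t ≠ 0 := (sub_pos.2 ht).ne'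
  exact ((Asymptotics.isLittleO_const_iff hne).2 hnum).trans_isBigO
    ((Asymptotics.isEquivalent_const_iff_tendsto hne).2 hlim).isBigO_symm

variable [CompleteSpace E]

lemma integral_comp_tsFloor_tsSigma {f : ℝ → E} (ht : t ∈ tsTk T) :
    ∫ r in t..tsSigma T t, f (tsFloor (tsTk T) r) = (tsSigma T t - t) • f t := by
  have hconst : EqOn (fun r => f (tsFloor (tsTk T) r)) (fun _ => f t)
      (uIoo t (tsSigma T t)) := by
    rw [uIoo_of_le (le_tsSigma T t)]
    intro r hr
    exact congrArg f <| tsFloor_eq ht hr.1.le fun x hx hxr =>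
      not_lt.1 fun htx => (tsSigma_le hx.1 htx).not_gt (hxr.trans_lt hr.2)
  rw [intervalIntegral.integral_congr_uIoo hconst, intervalIntegral.integral_const]

lemma norm_integral_comp_tsFloor_sub_le {s ε : ℝ} {f : ℝ → E} (hS : IsClosed S)
    (hmin : min s t ∈ S)
    (hint : IntervalIntegrable (fun r => f (tsFloor S r)) volume s t)
    (hε : ∀ x ∈ S, x ∈ uIcc s t → ‖f x - f t‖ ≤ ε) :
    ‖(∫ r in s..t, f (tsFloor S r)) - (t - s) • f t‖ ≤ ε * |t - s| := by
  rw [← intervalIntegral.integral_const, ← intervalIntegral.integral_sub hint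
    intervalIntegrable_const]
  refine intervalIntegral.norm_integral_le_of_norm_le_const fun r hr => ?_
  exact hε _ (tsFloor_mem hS hmin hr.1.le)
    ⟨le_tsFloor hmin hr.1.le, (tsFloor_le hmin hr.1.le).trans hr.2⟩

lemma isDeltaAntideriv_integral_comp_tsFloor {a b c : ℝ} {f : ℝ → E} (hT : IsClosed T)
    (ha : IsLeast T a) (hb : IsGreatest T b) (hab : a < b) (hc : c ∈ Icc a b)
    (hf : RdContinuousOn (tsTk T) f) :
    IsDeltaAntideriv T f fun t => ∫ r in c..t, f (tsFloor (tsTk T) r) := by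
  intro t ht
  set g : ℝ → E := fun r => f (tsFloor (tsTk T) r)
  have hint {s u : ℝ} (hs : a ≤ s) (hu : a ≤ u) : IntervalIntegrable g volume s u :=
    hf.intervalIntegrable_comp_tsFloor (isCompact_tsTk hT ha hb) (isLeast_tsTk ha hb hab).1 hs hu
  have sub_eq {s u : ℝ} (hs : s ∈ T) (hu : u ∈ T) :
      (∫ r in c..u, g r) - ∫ r in c..s, g r = ∫ r in s..u, g r :=
    intervalIntegral.integral_interval_sub_left (hint hc.1 (ha.2 hu)) (hint hc.1 (ha.2 hs))
  rcases (le_tsSigma T t).eq_or_lt' with hσ | hσ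
  · intro ε hε
    obtain ⟨δ, hδ, hδf⟩ := Metric.continuousWithinAt_iff.1
      ((hf t ht).1 (tsSigma_tsTk_eq_self hb hσ)) ε hε
    refine ⟨δ, hδ, fun s hs => ?_⟩
    rw [hσ, sub_eq hs.1 ht.1]
    have hmin : min s t ∈ tsTk T :=
      mem_tsTk_of_le hb (min_rec' (· ∈ T) hs.1 ht.1) (min_le_right s t) ht
    refine norm_integral_comp_tsFloor_sub_le (isCompact_tsTk hT ha hb).isClosed hmin
      (hint (ha.2 hs.1) (ha.2 ht.1)) fun x hx hxst => ?_
    have hxt : dist x t ≤ dist s t := by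
      rw [dist_comm x, dist_comm s]
      exact Real.dist_left_le_of_mem_uIcc (uIcc_comm s t ▸ hxst)
    have hst : dist s t < δ := abs_sub_lt_iff.2 ⟨by linarith [hs.2.2], by linarith [hs.2.1]⟩
    rw [← dist_eq_norm]
    exact (hδf hx (hxt.trans_lt hst)).le
  · refine deltaDiffAt_of_lt_tsSigma ?_ hσ ?_
    · have hcont := intervalIntegral.continuousOn_primitive_interval' (hint le_rfl hab.le)
        (uIcc_of_le hab.le ▸ hc)
      rw [uIcc_of_le hab.le] at hcont
      exact (hcont t ⟨ha.2 ht.1, hb.2 ht.1⟩).mono fun s hs => ⟨ha.2 hs, hb.2 hs⟩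
    · rw [sub_eq ht.1 (tsSigma_mem hT ht.1), integral_comp_tsFloor_tsSigma ht]

end DeltaDerivative

section BumpVariation

variable {T : Set ℝ} {a b : ℝ}

lemma exists_C1rd_ramp {c : ℝ} (hT : IsClosed T) (ha : IsLeast T a) (hb : IsGreatest T b)
    (hc : c ∈ T) (hac : a < c) :
    ∃ η : ℝ → ℝ, C1rd T η (fun t => max (c - t) 0) ∧ (∀ t ∈ T, c ≤ t → η t = 0) ∧
      ∀ t ∈ T, t < c → tsMu T t * (c - t) ≤ -η t ∧ -η t ≤ (c - t) * (c - t) := by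
  have hab : a < b := hac.trans_le (hb.2 hc)
  have hη_rd : RdContinuousOn (tsTk T) fun t => max (c - t) 0 :=
    rdContinuousOn_of_continuousOn (by fun_prop)
  set g : ℝ → ℝ := fun r => max (c - tsFloor (tsTk T) r) 0
  have hg_nonneg (r : ℝ) : 0 ≤ g r := le_max_right _ _
  refine ⟨fun t => ∫ r in c..t, g r, ⟨isDeltaAntideriv_integral_comp_tsFloor hT ha hb hab
    ⟨hac.le, hb.2 hc⟩ hη_rd, hη_rd⟩, fun t ht hct => ?_, fun t ht htc => ?_⟩
  · rcases hct.eq_or_lt with rfl | hct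
    · exact intervalIntegral.integral_same
    · have hcTk : c ∈ tsTk T := mem_tsTk_of_lt hb hc (hct.trans_le (hb.2 ht))
      have hg_zero : EqOn g (fun _ => 0) (uIcc c t) := fun r hr => by
        rw [uIcc_of_le hct.le] at hr
        exact max_eq_right (sub_nonpos.2 (le_tsFloor hcTk hr.1))
      simp only [intervalIntegral.integral_congr hg_zero, intervalIntegral.integral_zero]
  · have htTk : t ∈ tsTk T := mem_tsTk_of_lt hb ht (htc.trans_le (hb.2 hc))
    have hint : IntervalIntegrable g volume t c := hη_rd.intervalIntegrable_comp_tsFloor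
      (isCompact_tsTk hT ha hb) (isLeast_tsTk ha hb hab).1 (ha.2 ht) hac.le
    rw [← intervalIntegral.integral_symm]
    constructor
    · calc tsMu T t * (c - t) = ∫ r in t..tsSigma T t, g r := by
            rw [integral_comp_tsFloor_tsSigma (f := fun t => max (c - t) 0) htTk,
              max_eq_left (sub_pos.2 htc).le, smul_eq_mul, tsMu]
        _ ≤ ∫ r in t..c, g r := intervalIntegral.integral_mono_interval le_rfl
            (le_tsSigma T t) (tsSigma_le hc htc) (.of_forall hg_nonneg) hint
    · calc ∫ r in t..c, g r ≤ ∫ _ in t..c, (c - t) :=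
            intervalIntegral.integral_mono_on htc.le hint intervalIntegrable_const fun r hr =>
              max_le (sub_le_sub_left (le_tsFloor htTk hr.1) c) (sub_pos.2 htc).le
        _ = (c - t) * (c - t) := by rw [intervalIntegral.integral_const, smul_eq_mul]

lemma exists_mem_gt_forall_lt {ε : ℝ} {U : Set ℝ} (hT : IsClosed T) (ha : IsLeast T a)
    (hb : b ∈ T) (hab : a < b) (hε : 0 < ε) (hU : U ∈ 𝓝[T] a) :
    ∃ c ∈ T, a < c ∧ ∀ t ∈ T, t < c →
      t ∈ U ∧ tsMu T a ≤ tsMu T t ∧ c - t ≤ tsMu T a + ε := by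
  rcases (le_tsSigma T a).eq_or_lt' with hσ | hσ
  · have hμ : tsMu T a = 0 := sub_eq_zero.2 hσ
    obtain ⟨δ, hδ, hδU⟩ := Metric.mem_nhdsWithin_iff.1 hU
    obtain ⟨c, hc, hac, hcδ⟩ := tsSigma_eq_self_iff.1 hσ b hb hab (a + min δ ε)
      (lt_add_of_pos_right a (lt_min hδ hε))
    refine ⟨c, hc, hac, fun t ht htc => ⟨hδU ⟨?_, ht⟩, ?_, ?_⟩⟩
    · rw [Metric.mem_ball, Real.dist_eq, abs_of_nonneg (sub_nonneg.2 (ha.2 ht))]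
      linarith [min_le_left δ ε]
    · rw [hμ]
      exact sub_nonneg.2 (le_tsSigma T t)
    · linarith [min_le_right δ ε, ha.2 ht]
  · refine ⟨tsSigma T a, tsSigma_mem hT ha.1, hσ, fun t ht htσ => ?_⟩
    obtain rfl : t = a :=
      (not_lt.1 fun hat => (tsSigma_le ht hat).not_gt htσ).antisymm (ha.2 ht)
    exact ⟨mem_of_mem_nhdsWithin ht hU, le_rfl, (lt_add_of_pos_right _ hε).le⟩

lemma exists_C1rd_bump {ε : ℝ} {U : Set ℝ} (hT : IsClosed T) (ha : IsLeast T a)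
    (hb : IsGreatest T b) (hab : a < b) (hε : 0 < ε) (hU : U ∈ 𝓝[T] a) :
    ∃ c ∈ T, a < c ∧ ∃ η ηd : ℝ → ℝ, C1rd T η ηd ∧
      (∀ t ∈ T, c ≤ t → η t = 0 ∧ ηd t = 0) ∧
      ∀ t ∈ T, t < c → t ∈ U ∧ 0 < ηd t ∧ |η t + tsMu T a * ηd t| ≤ ε * ηd t := by
  obtain ⟨c, hc, hac, hlt⟩ := exists_mem_gt_forall_lt hT ha hb.1 hab hε hU
  obtain ⟨η, hη, hη_zero, hη_bounds⟩ := exists_C1rd_ramp hT ha hb hc hac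
  refine ⟨c, hc, hac, η, fun t => max (c - t) 0, hη,
    fun t ht hct => ⟨hη_zero t ht hct, max_eq_right (sub_nonpos.2 hct)⟩, fun t ht htc => ?_⟩
  obtain ⟨htU, hμ, hct⟩ := hlt t ht htc
  obtain ⟨hlow, hup⟩ := hη_bounds t ht htc
  have hpos : 0 < c - t := sub_pos.2 htc
  simp only [max_eq_left hpos.le]
  refine ⟨htU, hpos, abs_le.2 ⟨?_, ?_⟩⟩
  · linarith [mul_le_mul_of_nonneg_right hct hpos.le, add_mul (tsMu T a) ε (c - t)]
  · linarith [mul_le_mul_of_nonneg_right hμ hpos.le, mul_pos hε hpos]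

end BumpVariation

section FirstOrderExpansion

variable {X F : Type*} [NormedAddCommGroup X] [NormedSpace ℝ X] [NormedAddCommGroup F]
  [NormedSpace ℝ F] {T : Set ℝ} {t₀ : ℝ}

lemma exists_eventually_norm_sub_sub_fderiv_le {f : ℝ → X → F} {f' : ℝ → X → X →L[ℝ] F}
    {x : ℝ → X} {ε : ℝ} (hf : ∀ t ∈ T, ∀ p, HasFDerivAt (f t) (f' t p) p)
    (hf' : ContinuousOn (fun q : ℝ × X => f' q.1 q.2) (T ×ˢ univ)) (ht₀ : t₀ ∈ T)
    (hx : ContinuousWithinAt x T t₀) (hε : 0 < ε) :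
    ∃ ρ > 0, ∀ᶠ t in 𝓝[T] t₀, ∀ h, ‖h‖ < ρ →
      ‖f t (x t + h) - f t (x t) - f' t₀ (x t₀) h‖ ≤ ε * ‖h‖ := by
  have hshift : Tendsto (fun q : ℝ × X => (q.1, x q.1 + q.2)) (𝓝[T] t₀ ×ˢ 𝓝 0)
      (𝓝[T ×ˢ univ] (t₀, x t₀)) := by
    rw [nhdsWithin_prod_eq, nhdsWithin_univ]
    refine tendsto_fst.prodMk ?_
    simpa only [add_zero] using!
      (hx.tendsto.comp tendsto_fst).add (tendsto_snd (f := 𝓝[T] t₀) (g := 𝓝 (0 : X)))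
  have hclose := ((hf' (t₀, x t₀) ⟨ht₀, mem_univ _⟩).tendsto.comp hshift).eventually
    (Metric.closedBall_mem_nhds _ hε)
  obtain ⟨P, hP, Q, hQ, hPQ⟩ := eventually_prod_iff.1 hclose
  obtain ⟨ρ, hρ, hball⟩ := Metric.eventually_nhds_iff_ball.1 hQ
  refine ⟨ρ, hρ, ?_⟩
  filter_upwards [hP, self_mem_nhdsWithin] with t htP htT h hh
  have hderiv : ∀ p ∈ Metric.ball (x t) ρ, ‖f' t p - f' t₀ (x t₀)‖ ≤ ε := fun p hp => by
    have hq : Q (p - x t) := hball _ (by rwa [mem_ball_zero_iff, ← dist_eq_norm])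
    simpa [dist_eq_norm] using hPQ htP hq
  have hmvt := (convex_ball (x t) ρ).norm_image_sub_le_of_norm_hasFDerivWithin_le'
    (fun p _ => (hf t htT p).hasFDerivWithinAt) hderiv (Metric.mem_ball_self hρ)
    (y := x t + h) (by simpa [Metric.mem_ball, dist_eq_norm] using hh)
  simpa only [add_sub_cancel_left] using hmvt

lemma exists_eventually_norm_sub_sub_partial_le {Y : Type*} [NormedAddCommGroup Y]
    [NormedSpace ℝ Y] {f : ℝ → X → Y → F} {f₁ : ℝ → X → Y → X →L[ℝ] F}
    {f₂ : ℝ → X → Y → Y →L[ℝ] F} {x : ℝ → X} {y : ℝ → Y} {ε : ℝ}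
    (hf₁ : ∀ t ∈ T, ∀ p q, HasFDerivAt (fun z => f t z q) (f₁ t p q) p)
    (hf₂ : ∀ t ∈ T, ∀ p q, HasFDerivAt (fun z => f t p z) (f₂ t p q) q)
    (hf₁c : ContinuousOn (fun r : ℝ × X × Y => f₁ r.1 r.2.1 r.2.2) (T ×ˢ univ))
    (hf₂c : ContinuousOn (fun r : ℝ × X × Y => f₂ r.1 r.2.1 r.2.2) (T ×ˢ univ))
    (ht₀ : t₀ ∈ T) (hx : ContinuousWithinAt x T t₀) (hy : ContinuousWithinAt y T t₀)
    (hε : 0 < ε) :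
    ∃ ρ > 0, ∀ᶠ t in 𝓝[T] t₀, ∀ h k, ‖h‖ < ρ → ‖k‖ < ρ →
      ‖f t (x t + h) (y t + k) - f t (x t) (y t)
        - (f₁ t₀ (x t₀) (y t₀) h + f₂ t₀ (x t₀) (y t₀) k)‖ ≤ ε * max ‖h‖ ‖k‖ := by
  have hderiv : ∀ t ∈ T, ∀ p : X × Y, HasFDerivAt (fun p : X × Y => f t p.1 p.2)
      ((f₁ t p.1 p.2).coprod (f₂ t p.1 p.2)) p := fun t ht p => by
    have hslice : Continuous fun q : X × Y => (t, q) := by fun_prop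
    refine (hasStrictFDerivAt_uncurry_coprod (.of_forall fun _ => hf₁ t ht _ _)
      (.of_forall fun _ => hf₂ t ht _ _) ?_ ?_).hasFDerivAt
    · exact (hf₁c.comp_continuous hslice fun q => ⟨ht, mem_univ q⟩).continuousAt
    · exact (hf₂c.comp_continuous hslice fun q => ⟨ht, mem_univ q⟩).continuousAt
  obtain ⟨ρ, hρ, hexp⟩ := exists_eventually_norm_sub_sub_fderiv_le
    (f' := fun t p => (f₁ t p.1 p.2).coprod (f₂ t p.1 p.2)) hderiv
    (hf₁c.continuousLinearMapCoprod hf₂c) ht₀ (hx.prodMk hy) hε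
  exact ⟨ρ, hρ, hexp.mono fun t ht h k hh hk => ht (h, k) (max_lt hh hk)⟩

end FirstOrderExpansion

section NaturalBoundaryCondition

variable {E : Type*} [NormedAddCommGroup E]

lemma tsSupNorm_le {S : Set ℝ} {f : ℝ → E} {C : ℝ} (hC : 0 ≤ C) (hf : ∀ t ∈ S, ‖f t‖ ≤ C) :
    tsSupNorm S f ≤ C :=
  Real.sSup_le (forall_mem_image.2 hf) hC

variable [NormedSpace ℝ E] {T : Set ℝ} {a b : ℝ}

lemma C1rd.continuousWithinAt_deltaDeriv_left {y yd : ℝ → E} (hy : C1rd T y yd)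
    (ha : IsLeast T a) (hb : IsGreatest T b) (hab : a < b) : ContinuousWithinAt yd T a := by
  have haTk : IsLeast (tsTk T) a := isLeast_tsTk ha hb hab
  refine (hy.2.continuousWithinAt_Ici haTk.1).mono_of_mem_nhdsWithin ?_
  filter_upwards [self_mem_nhdsWithin, mem_nhdsWithin_of_mem_nhds (Iio_mem_nhds hab)]
    with t ht htb
  exact ⟨mem_tsTk_of_lt hb ht htb, ha.2 ht⟩

lemma C1rd.exists_pos_forall_norm_smul_lt {η ηd : ℝ → ℝ} {r : ℝ} (hη : C1rd T η ηd)
    (hT : IsCompact (tsTk T)) (x : E) (hr : 0 < r) :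
    ∃ s : ℝ, 0 < s ∧ ∀ t ∈ tsTk T, ‖η t • s • x‖ < r ∧ ‖ηd t • s • x‖ < r := by
  obtain ⟨C, hC⟩ := ((rdContinuousOn_of_continuousOn hη.continuousOn).prodMk
    hη.2 |>.isBounded_image hT).exists_norm_le
  obtain ⟨s, hs, hsr⟩ := exists_pos_mul_lt hr (C * ‖x‖)
  have norm_smul_lt {z : ℝ} (hz : |z| ≤ C) : ‖z • s • x‖ < r := calc
    ‖z • s • x‖ = |z| * ‖x‖ * s := by
      rw [norm_smul, norm_smul, Real.norm_eq_abs, Real.norm_of_nonneg hs.le]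
      ring
    _ ≤ C * ‖x‖ * s := by gcongr
    _ < r := hsr
  refine ⟨s, hs, fun t ht => ?_⟩
  have hpair := max_le_iff.1 (hC _ (mem_image_of_mem _ ht))
  exact ⟨norm_smul_lt hpair.1, norm_smul_lt hpair.2⟩

variable {L : ℝ → E → E → ℝ} {Ly Lv : ℝ → E → E → StrongDual ℝ E} {ys yds : ℝ → E}

lemma exists_eventually_lagrangian_add_smul_lt
    (hLy : ∀ t ∈ T, ∀ y v, HasFDerivAt (fun z => L t z v) (Ly t y v) y)
    (hLv : ∀ t ∈ T, ∀ y v, HasFDerivAt (fun z => L t y z) (Lv t y v) v)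
    (hLyc : ContinuousOn (fun p : ℝ × E × E => Ly p.1 p.2.1 p.2.2) (T ×ˢ univ))
    (hLvc : ContinuousOn (fun p : ℝ × E × E => Lv p.1 p.2.1 p.2.2) (T ×ˢ univ))
    {t₀ m : ℝ} {ξ : E} (ht₀ : t₀ ∈ T) (hys : ContinuousWithinAt ys T t₀)
    (hyds : ContinuousWithinAt yds T t₀)
    (hξ : Lv t₀ (ys t₀) (yds t₀) ξ - m * Ly t₀ (ys t₀) (yds t₀) ξ < 0) :
    ∃ ε > 0, ∃ ρ > 0, ∀ᶠ t in 𝓝[T] t₀, ∀ α β : ℝ, 0 < β → |α + m * β| ≤ ε * β →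
      ‖α • ξ‖ < ρ → ‖β • ξ‖ < ρ →
      L t (ys t + α • ξ) (yds t + β • ξ) < L t (ys t) (yds t) := by
  set p := Ly t₀ (ys t₀) (yds t₀) ξ with hp
  set q := Lv t₀ (ys t₀) (yds t₀) ξ with hq
  obtain ⟨ε₀, hε₀, hε₀ξ⟩ := exists_pos_mul_lt (neg_pos.2 hξ) (|p| + (|m| + 1) * ‖ξ‖)
  set ε := min ε₀ 1
  have hε : 0 < ε := lt_min hε₀ one_pos
  obtain ⟨ρ, hρ, hexp⟩ :=
    exists_eventually_norm_sub_sub_partial_le hLy hLv hLyc hLvc ht₀ hys hyds hε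
  refine ⟨ε, hε, ρ, hρ, hexp.mono fun t ht α β hβ hαβ hα_lt hβ_lt => ?_⟩
  have hmax : max ‖α • ξ‖ ‖β • ξ‖ ≤ (|m| + 1) * β * ‖ξ‖ := by
    rw [norm_smul, norm_smul, Real.norm_eq_abs, Real.norm_of_nonneg hβ.le,
      ← max_mul_of_nonneg _ _ (norm_nonneg ξ)]
    gcongr
    refine max_le ?_ (le_mul_of_one_le_left hβ.le (by linarith [abs_nonneg m]))
    calc |α| = |(α + m * β) - m * β| := by rw [add_sub_cancel_right]
      _ ≤ |α + m * β| + |m * β| := abs_sub _ _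
      _ ≤ 1 * β + |m| * β := by
        rw [abs_mul, abs_of_pos hβ]
        gcongr
        exact hαβ.trans (mul_le_mul_of_nonneg_right (min_le_right _ _) hβ.le)
      _ = (|m| + 1) * β := by ring
  have hlin : α * p + β * q ≤ (q - m * p) * β + ε * β * |p| := by
    have hdev : (α + m * β) * p ≤ ε * β * |p| :=
      (le_abs_self _).trans (abs_mul _ p ▸ mul_le_mul_of_nonneg_right hαβ (abs_nonneg p))
    linarith
  have hrem := (le_abs_self _).trans (ht _ _ hα_lt hβ_lt)
  simp only [map_smul, smul_eq_mul, ← hp, ← hq] at hrem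
  have hneg : (q - m * p) * β + ε * β * |p| + ε * ((|m| + 1) * β * ‖ξ‖) < 0 := by
    have hcoef : (|p| + (|m| + 1) * ‖ξ‖) * ε < -(q - m * p) :=
      (mul_le_mul_of_nonneg_left (min_le_left _ _) (by positivity)).trans_lt hε₀ξ
    linarith [mul_lt_mul_of_pos_right hcoef hβ]
  linarith [mul_le_mul_of_nonneg_left hmax hε.le]

lemma exists_C1rd_lagrangian_lt (hT : IsClosed T) (ha : IsLeast T a) (hb : IsGreatest T b)
    (hab : a < b)
    (hLy : ∀ t ∈ T, ∀ y v, HasFDerivAt (fun z => L t z v) (Ly t y v) y)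
    (hLv : ∀ t ∈ T, ∀ y v, HasFDerivAt (fun z => L t y z) (Lv t y v) v)
    (hLyc : ContinuousOn (fun p : ℝ × E × E => Ly p.1 p.2.1 p.2.2) (T ×ˢ univ))
    (hLvc : ContinuousOn (fun p : ℝ × E × E => Lv p.1 p.2.1 p.2.2) (T ×ˢ univ))
    (hys : C1rd T ys yds) {ξ : E} {δ : ℝ} (hδ : 0 < δ)
    (hξ : Lv a (ys a) (yds a) ξ - tsMu T a * Ly a (ys a) (yds a) ξ < 0) :
    ∃ y yd, C1rd T y yd ∧ y b = ys b ∧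
      tsSupNorm (tsTk T) (fun t => y t - ys t) + tsSupNorm (tsTk T) (fun t => yd t - yds t) < δ ∧
      ∃ c ∈ Ioc a b, ∀ t ∈ tsTk T, L t (y t) (yd t) ≤ L t (ys t) (yds t) ∧
        (t < c → L t (y t) (yd t) < L t (ys t) (yds t)) := by
  have hys_cont : ContinuousWithinAt ys T a :=
    (hys.1 a (isLeast_tsTk ha hb hab).1).continuousWithinAt ha.1
  have hyds_cont : ContinuousWithinAt yds T a :=
    hys.continuousWithinAt_deltaDeriv_left ha hb hab
  obtain ⟨ε, hε, ρ, hρ, hdecr⟩ := exists_eventually_lagrangian_add_smul_lt hLy hLv hLyc hLvc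
    ha.1 hys_cont hyds_cont hξ
  obtain ⟨c, hc, hac, η, ηd, hη, hη_zero, hη_lt⟩ := exists_C1rd_bump hT ha hb hab hε hdecr
  obtain ⟨s, hs, hs_lt⟩ := hη.exists_pos_forall_norm_smul_lt (isCompact_tsTk hT ha hb) ξ
    (lt_min hρ (half_pos (half_pos hδ)))
  have hlt : ∀ t ∈ tsTk T, t < c →
      L t (ys t + η t • s • ξ) (yds t + ηd t • s • ξ) < L t (ys t) (yds t) := fun t ht htc => by
    obtain ⟨htU, hpos, hbound⟩ := hη_lt t ht.1 htc
    have hsmall := hs_lt t ht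
    simp only [smul_smul, lt_min_iff] at hsmall ⊢
    refine htU _ _ (mul_pos hpos hs) ?_ hsmall.1.1 hsmall.2.1
    calc |η t * s + tsMu T a * (ηd t * s)| = |η t + tsMu T a * ηd t| * s := by
          rw [← abs_of_pos hs, ← abs_mul, abs_of_pos hs]
          ring_nf
      _ ≤ ε * ηd t * s := by gcongr
      _ = ε * (ηd t * s) := mul_assoc _ _ _
  refine ⟨_, _, hys.add_smul hη (s • ξ), ?_, ?_, c, ⟨hac, hb.2 hc⟩, fun t ht => ⟨?_, hlt t ht⟩⟩
  · simp only [(hη_zero b hb.1 (hb.2 hc)).1, zero_smul, add_zero]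
  · simp only [add_sub_cancel_left]
    have hquarter : 0 ≤ δ / 2 / 2 := (half_pos (half_pos hδ)).le
    have hsup := add_le_add
      (tsSupNorm_le hquarter fun t ht => ((hs_lt t ht).1.trans_le (min_le_right _ _)).le)
      (tsSupNorm_le hquarter fun t ht => ((hs_lt t ht).2.trans_le (min_le_right _ _)).le)
    rw [add_halves] at hsup
    exact hsup.trans_lt (half_lt_self hδ)
  · rcases lt_or_ge t c with htc | hct
    · exact (hlt t ht htc).le
    · obtain ⟨hη0, hηd0⟩ := hη_zero t ht.1 hct
      simp only [hη0, hηd0, zero_smul, add_zero, le_refl]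

theorem natural_boundary_condition_left_endpoint_free_general
    (hT : IsClosed T) (ha : IsLeast T a) (hb : IsGreatest T b) (hab : a < b)
    (hLc : ContinuousOn (fun p : ℝ × E × E => L p.1 p.2.1 p.2.2) (T ×ˢ univ))
    (hLy : ∀ t ∈ T, ∀ y v, HasFDerivAt (fun z => L t z v) (Ly t y v) y)
    (hLv : ∀ t ∈ T, ∀ y v, HasFDerivAt (fun z => L t y z) (Lv t y v) v)
    (hLyc : ContinuousOn (fun p : ℝ × E × E => Ly p.1 p.2.1 p.2.2) (T ×ˢ univ))
    (hLvc : ContinuousOn (fun p : ℝ × E × E => Lv p.1 p.2.1 p.2.2) (T ×ˢ univ))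
    (hys : C1rd T ys yds)
    (hmin : ∃ δ > 0, ∀ y yd, C1rd T y yd → y b = ys b →
      tsSupNorm (tsTk T) (fun t => y t - ys t)
        + tsSupNorm (tsTk T) (fun t => yd t - yds t) < δ →
      ∀ F G : ℝ → ℝ,
        IsDeltaAntideriv T (fun t => L t (ys t) (yds t)) F →
        IsDeltaAntideriv T (fun t => L t (y t) (yd t)) G →
        F b - F a ≤ G b - G a) :
    Lv a (ys a) (yds a) - tsMu T a • Ly a (ys a) (yds a) = 0 := by
  obtain ⟨δ, hδ, hmin⟩ := hmin
  have hnonneg : ∀ ξ, 0 ≤ Lv a (ys a) (yds a) ξ - tsMu T a * Ly a (ys a) (yds a) ξ := by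
    refine fun ξ => not_lt.1 fun hξ => ?_
    obtain ⟨y, yd, hy, hyb, hyδ, c, hc, hdecr⟩ :=
      exists_C1rd_lagrangian_lt hT ha hb hab hLy hLv hLyc hLvc hys hδ hξ
    have hrd := hy.rdContinuousOn_comp hLc
    have hrds := hys.rdContinuousOn_comp hLc
    have antideriv {f : ℝ → ℝ} (hf : RdContinuousOn (tsTk T) f) :=
      isDeltaAntideriv_integral_comp_tsFloor hT ha hb hab ⟨le_rfl, hab.le⟩ hf
    have hle := hmin y yd hy hyb hyδ _ _ (antideriv hrds) (antideriv hrd)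
    simp only [intervalIntegral.integral_same, sub_zero] at hle
    exact hle.not_gt <| integral_comp_tsFloor_lt (isCompact_tsTk hT ha hb)
      (isLeast_tsTk ha hb hab).1 hc.1 hc.2 hrd hrds (fun t ht => (hdecr t ht).1)
      fun t ht => (hdecr t ht).2
  ext ξ
  have hneg := hnonneg (-ξ)
  simp only [map_neg] at hneg
  have hle : Lv a (ys a) (yds a) ξ - tsMu T a * Ly a (ys a) (yds a) ξ ≤ 0 := by linarith
  exact hle.antisymm (hnonneg ξ)

end NaturalBoundaryCondition

theorem natural_boundary_condition_left_endpoint_free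
    {n : ℕ} (hn : 1 ≤ n)
    (T₀ : Set ℝ) (hT₀closed : IsClosed T₀)
    (a b : ℝ) (ha : a ∈ T₀) (hb : b ∈ T₀) (hab : a < b)
    (T : Set ℝ) (hT : T = Icc a b ∩ T₀)
    (hT3 : ∃ c ∈ T, c ≠ a ∧ c ≠ b)
    (L : ℝ → En n → En n → ℝ) (Ly Lv : ℝ → En n → En n → En n)
    (hLc : ContinuousOn (fun p : ℝ × En n × En n => L p.1 p.2.1 p.2.2)
      (T ×ˢ (univ : Set (En n × En n))))
    (hLC2 : ∀ t ∈ T, ContDiff ℝ 2 (fun p : En n × En n => L t p.1 p.2))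
    (hLy : ∀ t ∈ T, ∀ y v : En n, HasGradientAt (fun z => L t z v) (Ly t y v) y)
    (hLv : ∀ t ∈ T, ∀ y v : En n, HasGradientAt (fun z => L t y z) (Lv t y v) v)
    (hLyc : ContinuousOn (fun p : ℝ × En n × En n => Ly p.1 p.2.1 p.2.2)
      (T ×ˢ (univ : Set (En n × En n))))
    (hLvc : ContinuousOn (fun p : ℝ × En n × En n => Lv p.1 p.2.1 p.2.2)
      (T ×ˢ (univ : Set (En n × En n))))
    (ys yds : ℝ → En n) (hys : C1rd T ys yds)
    (hmin : ∃ δ > 0, ∀ y yd : ℝ → En n, C1rd T y yd →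
      y b = ys b →
      tsSupNorm (tsTk T) (fun t => y t - ys t)
        + tsSupNorm (tsTk T) (fun t => yd t - yds t) < δ →
      ∀ F G : ℝ → ℝ,
        IsDeltaAntideriv T (fun t => L t (ys t) (yds t)) F →
        IsDeltaAntideriv T (fun t => L t (y t) (yd t)) G →
        F b - F a ≤ G b - G a) :
    Lv a (ys a) (yds a) - tsMu T a • Ly a (ys a) (yds a) = 0 := by
  have hT_isClosed : IsClosed T := hT ▸ isClosed_Icc.inter hT₀closed
  have ha_least : IsLeast T a := hT ▸ ⟨⟨left_mem_Icc.2 hab.le, ha⟩, fun _ ht => ht.1.1⟩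
  have hb_greatest : IsGreatest T b := hT ▸ ⟨⟨right_mem_Icc.2 hab.le, hb⟩, fun _ ht => ht.1.2⟩
  have hdual := natural_boundary_condition_left_endpoint_free_general hT_isClosed ha_least
    hb_greatest hab hLc (fun t ht y v => (hLy t ht y v).hasFDerivAt)
    (fun t ht y v => (hLv t ht y v).hasFDerivAt)
    ((InnerProductSpace.toDual ℝ (En n)).continuous.comp_continuousOn hLyc)
    ((InnerProductSpace.toDual ℝ (En n)).continuous.comp_continuousOn hLvc) hys hmin
  apply (InnerProductSpace.toDual ℝ (En n)).injective
  simpa only [map_sub, map_smul, map_zero] using hdual
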